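/- Let $A = \mathbb{Q}[y_1,\ldots,y_n]$ and let $C$ be a finite complex of finitely generated free graded $A$-modules. For $\nu \in \mathbb{Q}^n$ let $C_\nu = C \otimes_A \mathbb{Q}_\nu$ be the specialization at $\nu$. If $H^*(C_0) \cong H^*(C_\nu)$ as graded vector spaces for all generic $\nu$ (i.e., all $\nu$ with $\nu_i \neq \nu_j$ for $i \neq j$), then $H^*(C)$ is a free $A$-module. -/

import Mathlib

set_option synthInstance.maxHeartbeats 1000000
set_option maxHeartbeats 1000000

open MvPolynomial

/-- `A = ℚ[y₁,…,y_n]`, positively graded with each `yᵢ` in degree `1`. -/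
abbrev Ay (n : ℕ) : Type := MvPolynomial (Fin n) ℚ

/-- A finite complex of finitely generated free graded `A`-modules, presented by
homogeneous matrices: in homological degree `k` the module is free on `r k`
generators, the `i`-th generator sitting in internal degree `g k i`, and the
differential `C_k → C_{k+1}` is given by the matrix `D k`, whose entries are
homogeneous of the appropriate degrees. -/
structure GradedFreeComplex (n : ℕ) where
  r : ℤ → ℕ
  bounded : ∃ N : ℕ, ∀ k : ℤ, (N : ℤ) < |k| → r k = 0
  g : ∀ k : ℤ, Fin (r k) → ℤ
  D : ∀ k : ℤ, Matrix (Fin (r (k + 1))) (Fin (r k)) (Ay n)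
  hom : ∀ k i j, (D k i j).IsHomogeneous (g k j - g (k + 1) i).toNat
  hneg : ∀ k i j, g k j < g (k + 1) i → D k i j = 0
  dd : ∀ k, D (k + 1) * D k = 0

namespace GradedFreeComplex

variable {n : ℕ} (C : GradedFreeComplex n)

/-- The cycles of the complex at homological position `k + 1`. -/
noncomputable def cycles (k : ℤ) : Submodule (Ay n) (Fin (C.r (k + 1)) → Ay n) :=
  LinearMap.ker (C.D (k + 1)).mulVecLin

/-- The boundaries, viewed inside the cycles at position `k + 1`. -/
noncomputable def boundaries (k : ℤ) : Submodule (Ay n) (C.cycles k) :=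
  (LinearMap.range (C.D k).mulVecLin).comap (C.cycles k).subtype

/-- The homology of the complex at position `k + 1`. -/
noncomputable def Hml (k : ℤ) : Type := C.cycles k ⧸ C.boundaries k

noncomputable instance (k : ℤ) : AddCommGroup (C.Hml k) :=
  inferInstanceAs (AddCommGroup (C.cycles k ⧸ C.boundaries k))
noncomputable instance (k : ℤ) : Module (Ay n) (C.Hml k) :=
  inferInstanceAs (Module (Ay n) (C.cycles k ⧸ C.boundaries k))
noncomputable instance (k : ℤ) : Module ℚ (C.Hml k) :=
  inferInstanceAs (Module ℚ (C.cycles k ⧸ C.boundaries k))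

/-- The degree-`m` graded piece of `A` (zero for `m < 0`). -/
noncomputable def pieceA (n : ℕ) (m : ℤ) : Submodule ℚ (Ay n) :=
  if m < 0 then ⊥ else homogeneousSubmodule (Fin n) ℚ m.toNat

/-- The internal-degree-`j` graded piece of the chain module at position `k`. -/
noncomputable def piece (k j : ℤ) : Submodule ℚ (Fin (C.r k) → Ay n) :=
  Submodule.pi Set.univ fun i => pieceA n (j - C.g k i)

/-- The internal-degree-`j` graded piece of the homology at position `k + 1`. -/
noncomputable def Hpiece (k j : ℤ) : Submodule ℚ (C.Hml k) :=
  ((C.piece (k + 1) j).comap ((C.cycles k).subtype.restrictScalars ℚ)).map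
    ((C.boundaries k).mkQ.restrictScalars ℚ)

/-- The specialization of the differential at a point `ν ∈ ℚⁿ`
(for `ν = 0` this is the complex `C₀ = C ⊗_A ℚ`). -/
noncomputable def Dspec (ν : Fin n → ℚ) (k : ℤ) :
    Matrix (Fin (C.r (k + 1))) (Fin (C.r k)) ℚ :=
  (C.D k).map (eval ν)

/-- The cycles of the specialized complex at position `k + 1`. -/
noncomputable def cyclesSpec (ν : Fin n → ℚ) (k : ℤ) :
    Submodule ℚ (Fin (C.r (k + 1)) → ℚ) :=
  LinearMap.ker (C.Dspec ν (k + 1)).mulVecLin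

/-- The homology of the specialized complex at position `k + 1`. -/
noncomputable def HmlSpec (ν : Fin n → ℚ) (k : ℤ) : Type :=
  C.cyclesSpec ν k ⧸
    ((LinearMap.range (C.Dspec ν k).mulVecLin).comap (C.cyclesSpec ν k).subtype)

noncomputable instance (ν : Fin n → ℚ) (k : ℤ) : AddCommGroup (C.HmlSpec ν k) :=
  inferInstanceAs (AddCommGroup (_ ⧸ _))
noncomputable instance (ν : Fin n → ℚ) (k : ℤ) : Module ℚ (C.HmlSpec ν k) :=
  inferInstanceAs (Module ℚ (_ ⧸ _))

/-- The internal-degree-`j` piece of the chain module of `C₀`: vectors supported on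
the generators of internal degree `j`. -/
noncomputable def piece0 (k j : ℤ) : Submodule ℚ (Fin (C.r k) → ℚ) :=
  Submodule.pi Set.univ fun i => if C.g k i = j then ⊤ else ⊥

/-- The internal-degree-`j` graded piece of the homology of `C₀` at position `k+1`. -/
noncomputable def H0piece (k j : ℤ) : Submodule ℚ (C.HmlSpec 0 k) :=
  ((C.piece0 (k + 1) j).comap (C.cyclesSpec 0 k).subtype).map
    ((LinearMap.range (C.Dspec 0 k).mulVecLin).comap (C.cyclesSpec 0 k).subtype).mkQ

end GradedFreeComplex

/-! A nonzero minor of `D(0)` is the value at `0` of a homogeneous minor of `D`, which is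
therefore a nonzero constant. Hence the rank of every differential can only go up when passing
from `0` to `ν`, and since homology has the same dimension at `0` and at generic `ν`, both
differentials touching a given position have constant rank there. So each has an invertible
block whose bordered minors vanish at all generic points, hence identically. Such a block of the
outgoing differential identifies the cycles with the vectors on the non-pivot coordinates. In
these coordinates the incoming differential becomes a submatrix, still homogeneous and with the
same rank at `0`, so its cokernel, the homology, is free by the same argument. Working with
explicit coordinates gives freeness directly, where splitting alone would give only
projectivity. -/

section MatrixRank

variable {K m l : Type*} [Field K] [Fintype l]

theorem exists_linearIndependent_rows [Finite m] {Y : Matrix m l K} {p : ℕ} (hp : Y.rank = p) :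
    ∃ a : Fin p → m, LinearIndependent K fun i => Y (a i) := by
  obtain ⟨κ, a, ha, hspan, hli⟩ := exists_linearIndependent' K Y.row
  have : Fintype κ := @Fintype.ofFinite κ (Finite.of_injective a ha)
  have hcard : Fintype.card κ = p := by
    rw [← hp, Y.rank_eq_finrank_span_row, ← hspan, finrank_span_eq_card hli]
  let e := Fintype.equivFinOfCardEq hcard
  exact ⟨a ∘ e.symm, hli.comp _ e.symm.injective⟩

theorem exists_submatrix_det_ne_zero [Finite m] (Y : Matrix m l K) :
    ∃ (a : Fin Y.rank → m) (b : Fin Y.rank → l), (Y.submatrix a b).det ≠ 0 := by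
  obtain ⟨a, ha⟩ := exists_linearIndependent_rows (Y := Y) rfl
  have hrank : (Y.submatrix a id).transpose.rank = Y.rank := by
    rw [Matrix.rank_transpose, LinearIndependent.rank_matrix (M := Y.submatrix a id) ha,
      Fintype.card_fin]
  obtain ⟨b, hb⟩ := exists_linearIndependent_rows hrank
  have hunit : IsUnit (Y.submatrix a b).transpose := Matrix.linearIndependent_rows_iff_isUnit.1 hb
  rw [Matrix.isUnit_transpose, Matrix.isUnit_iff_isUnit_det] at hunit
  exact ⟨a, b, hunit.ne_zero⟩

theorem card_le_rank_of_det_ne_zero {ι : Type*} [Fintype ι] [DecidableEq ι] {Y : Matrix m l K}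
    {a : ι → m} {b : ι → l} (h : (Y.submatrix a b).det ≠ 0) : Fintype.card ι ≤ Y.rank :=
  (Matrix.rank_of_det_ne_zero h).symm.trans_le (Y.rank_submatrix_le a b)

theorem rank_submatrix_eq_of_disjoint {m₀ : Type*} {Y : Matrix m l K} {f : m₀ → m}
    (h : Disjoint (LinearMap.range Y.mulVecLin) (LinearMap.ker (LinearMap.funLeft K K f))) :
    (Y.submatrix f id).rank = Y.rank := by
  have hinj : Function.Injective
      ((LinearMap.funLeft K K f).domRestrict (LinearMap.range Y.mulVecLin)) :=
    LinearMap.injective_domRestrict_iff.2 h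
  have hrange : LinearMap.range (Y.submatrix f id).mulVecLin =
      LinearMap.range ((LinearMap.funLeft K K f).domRestrict (LinearMap.range Y.mulVecLin)) := by
    rw [LinearMap.range_domRestrict, ← LinearMap.range_comp]
    rfl
  rw [Matrix.rank, hrange, LinearMap.finrank_range_of_inj hinj, Matrix.rank]

end MatrixRank

theorem range_mulVecLin_le_ker {R m l k : Type*} [CommSemiring R] [Fintype l] [Fintype k]
    {D : Matrix m l R} {E : Matrix l k R} (hDE : D * E = 0) :
    LinearMap.range E.mulVecLin ≤ LinearMap.ker D.mulVecLin := by
  rw [LinearMap.range_le_ker_iff, ← Matrix.mulVecLin_mul, hDE, Matrix.mulVecLin_zero]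

theorem mulVec_extend_zero {R m l ι : Type*} [NonUnitalNonAssocSemiring R] [Fintype l] [Fintype ι]
    (X : Matrix m l R) {b : ι → l} (hb : Function.Injective b) (w : ι → R) :
    X.mulVec (Function.extend b w 0) = (X.submatrix id b).mulVec w := by
  ext i
  refine (Fintype.sum_of_injective b hb _ _ (fun j hj => ?_) fun k => ?_).symm
  · rw [Function.extend_apply' _ _ _ hj, Pi.zero_apply, mul_zero]
  · exact congrArg (X i (b k) * ·) (hb.extend_apply w 0 k).symm

theorem free_ker_funLeft {R m ι : Type*} [Semiring R] [Finite m] (a : ι → m) :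
    Module.Free R (LinearMap.ker (LinearMap.funLeft R R a)) := by
  classical
  have hker : LinearMap.ker (LinearMap.funLeft R R a) =
      ⨅ i ∈ Set.range a, LinearMap.ker (LinearMap.proj i : (m → R) →ₗ[R] R) := by
    ext x
    simp [funext_iff, LinearMap.funLeft_apply]
  rw [hker]
  exact Module.Free.of_equiv (LinearMap.iInfKerProjEquiv R (fun _ => R)
    (disjoint_compl_left (a := Set.range a)) (Set.compl_union_self _).ge).symm

section PivotBlock

variable {R S m l ι : Type*} [CommRing R] [CommRing S] [Fintype ι] [DecidableEq ι]

/-- The `ι × ι` block of `X` with rows `a` and columns `b` is invertible, and every minor obtained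
by bordering it with one more row and column vanishes. Over a field this says that the block is
a nonsingular block of maximal size; over a ring it makes kernel and cokernel of `X` free. -/
structure IsPivotBlock (X : Matrix m l R) (a : ι → m) (b : ι → l) : Prop where
  isUnit_det : IsUnit (X.submatrix a b).det
  det_bordered : ∀ i j,
    (X.submatrix (Sum.elim a fun _ : Unit => i) (Sum.elim b fun _ : Unit => j)).det = 0

namespace IsPivotBlock

variable {X : Matrix m l R} {a : ι → m} {b : ι → l}

theorem map (h : IsPivotBlock X a b) (f : R →+* S) : IsPivotBlock (X.map f) a b where
  isUnit_det := by
    have := h.isUnit_det.map f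
    rwa [f.map_det] at this
  det_bordered i j := by
    have := congrArg f (h.det_bordered i j)
    rwa [f.map_det, map_zero] at this

-- The Schur complement of the block in a bordered minor is the corresponding entry of
-- `X - X[:, b] * X[a, b]⁻¹ * X[a, :]`.
theorem eq_mul_inv_mul (h : IsPivotBlock X a b) :
    X = X.submatrix id b * (X.submatrix a b)⁻¹ * X.submatrix a id := by
  ext i j
  let := Matrix.invertibleOfIsUnitDet _ h.isUnit_det
  have hblocks : X.submatrix (Sum.elim a fun _ : Unit => i) (Sum.elim b fun _ : Unit => j) =
      Matrix.fromBlocks (X.submatrix a b) (X.submatrix a fun _ => j)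
        (X.submatrix (fun _ => i) b) (X.submatrix (fun _ => i) fun _ => j) := by
    ext (_ | _) (_ | _) <;> rfl
  have hdet := h.det_bordered i j
  rw [hblocks, Matrix.det_fromBlocks₁₁, h.isUnit_det.mul_right_eq_zero, Matrix.det_unique,
    Matrix.invOf_eq_nonsing_inv] at hdet
  exact sub_eq_zero.1 hdet

theorem injective_right [Nontrivial R] (h : IsPivotBlock X a b) : Function.Injective b := by
  intro i j hij
  by_contra hne
  refine h.isUnit_det.ne_zero (Matrix.det_zero_of_column_eq hne fun k => ?_)
  simp only [Matrix.submatrix_apply, hij]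

variable [Fintype l]

theorem mulVec_eq (h : IsPivotBlock X a b) (x : l → R) :
    X.mulVec x =
      (X.submatrix id b).mulVec ((X.submatrix a b)⁻¹.mulVec ((X.mulVec x) ∘ a)) := by
  conv_lhs => rw [h.eq_mul_inv_mul]
  rw [← Matrix.mulVec_mulVec, ← Matrix.mulVec_mulVec]
  rfl

theorem isCompl_range_ker_funLeft (h : IsPivotBlock X a b) :
    IsCompl (LinearMap.range X.mulVecLin) (LinearMap.ker (LinearMap.funLeft R R a)) := by
  refine ⟨Submodule.disjoint_def.2 ?_, Submodule.codisjoint_iff_exists_add_eq.2 fun y => ?_⟩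
  · rintro _ ⟨x, rfl⟩ hx
    have hxa : (X.mulVec x) ∘ a = 0 := hx
    rw [Matrix.mulVecLin_apply, h.mulVec_eq, hxa, Matrix.mulVec_zero, Matrix.mulVec_zero]
  · let y₁ := (X.submatrix id b).mulVec ((X.submatrix a b)⁻¹.mulVec (y ∘ a))
    have hy₁ : y₁ ∘ a = y ∘ a := by
      change (X.submatrix a b).mulVec ((X.submatrix a b)⁻¹.mulVec (y ∘ a)) = y ∘ a
      rw [Matrix.mulVec_mulVec, Matrix.mul_nonsing_inv _ h.isUnit_det, Matrix.one_mulVec]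
    have hrange : LinearMap.range (X.submatrix id b).mulVecLin ≤ LinearMap.range X.mulVecLin := by
      rw [Matrix.range_mulVecLin, Matrix.range_mulVecLin]
      exact Submodule.span_mono (Set.range_comp_subset_range b X.col)
    refine ⟨y₁, y - y₁, hrange ⟨_, rfl⟩, ?_, add_sub_cancel _ _⟩
    rw [LinearMap.mem_ker, map_sub, sub_eq_zero]
    exact hy₁.symm

theorem isCompl_ker_ker_funLeft [Nontrivial R] (h : IsPivotBlock X a b) :
    IsCompl (LinearMap.ker X.mulVecLin)
      (LinearMap.ker (LinearMap.funLeft R R (Subtype.val : ↥(Set.range b)ᶜ → l))) := by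
  have hb := h.injective_right
  refine ⟨Submodule.disjoint_def.2 fun x hx hx₀ => ?_,
    Submodule.codisjoint_iff_exists_add_eq.2 fun y => ?_⟩
  · have hext : x = Function.extend b (x ∘ b) 0 := by
      ext j
      by_cases hj : ∃ i, b i = j
      · obtain ⟨i, rfl⟩ := hj
        rw [hb.extend_apply, Function.comp_apply]
      · rw [Function.extend_apply' _ _ _ hj]
        exact congrFun (LinearMap.mem_ker.1 hx₀) ⟨j, hj⟩
    have hblock : (X.submatrix a b).mulVec (x ∘ b) = 0 := by
      have hXx : X.mulVec (Function.extend b (x ∘ b) 0) = 0 := hext ▸ LinearMap.mem_ker.1 hx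
      rw [mulVec_extend_zero X hb] at hXx
      exact congrArg (· ∘ a) hXx
    have hxb : x ∘ b = 0 :=
      Matrix.mulVec_injective_of_isUnit ((Matrix.isUnit_iff_isUnit_det _).2 h.isUnit_det)
        (hblock.trans (Matrix.mulVec_zero _).symm)
    rw [hext, hxb]
    exact Function.extend_zero b
  · let w := Function.extend b ((X.submatrix a b)⁻¹.mulVec ((X.mulVec y) ∘ a)) 0
    refine ⟨y - w, w, ?_, ?_, sub_add_cancel _ _⟩
    · rw [LinearMap.mem_ker, Matrix.mulVecLin_apply, Matrix.mulVec_sub, mulVec_extend_zero X hb,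
        ← h.mulVec_eq, sub_self]
    · ext j
      exact Function.extend_apply' _ _ _ j.2

theorem free_quotient_range [Finite m] (h : IsPivotBlock X a b) :
    Module.Free R ((m → R) ⧸ LinearMap.range X.mulVecLin) :=
  have := free_ker_funLeft (R := R) a
  Module.Free.of_equiv (Submodule.quotientEquivOfIsCompl _ _ h.isCompl_range_ker_funLeft).symm

/-- A vector in the kernel of `X` is determined by its coordinates off the pivot columns, and these
coordinates can be prescribed arbitrarily. -/
noncomputable def kerEquiv [Nontrivial R] (h : IsPivotBlock X a b) :
    LinearMap.ker X.mulVecLin ≃ₗ[R] (↥(Set.range b)ᶜ → R) :=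
  LinearEquiv.ofBijective
    ((LinearMap.funLeft R R Subtype.val).domRestrict (LinearMap.ker X.mulVecLin))
    ⟨LinearMap.injective_domRestrict_iff.2 h.isCompl_ker_ker_funLeft.disjoint,
      (LinearMap.surjective_domRestrict_iff
        (LinearMap.funLeft_surjective_of_injective _ _ _ Subtype.val_injective)).2
        h.isCompl_ker_ker_funLeft.codisjoint⟩

theorem free_homology {k κ : Type*} [Nontrivial R] [Fintype κ] [DecidableEq κ] [Fintype k]
    {D : Matrix m l R} {E : Matrix l k R} (hDE : D * E = 0) (hD : IsPivotBlock D a b)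
    {a' : κ → ↥(Set.range b)ᶜ} {b' : κ → k}
    (hE : IsPivotBlock (E.submatrix (Subtype.val : ↥(Set.range b)ᶜ → l) id) a' b') :
    Module.Free R (LinearMap.ker D.mulVecLin ⧸
      (LinearMap.range E.mulVecLin).comap (LinearMap.ker D.mulVecLin).subtype) := by
  have hmap : ((LinearMap.range E.mulVecLin).comap (LinearMap.ker D.mulVecLin).subtype).map
      (hD.kerEquiv : _ →ₗ[R] _) =
      LinearMap.range (E.submatrix (Subtype.val : ↥(Set.range b)ᶜ → l) id).mulVecLin :=
    calc
      _ = (((LinearMap.range E.mulVecLin).comap (LinearMap.ker D.mulVecLin).subtype).map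
            (LinearMap.ker D.mulVecLin).subtype).map (LinearMap.funLeft R R Subtype.val) :=
          Submodule.map_comp _ _ _
      _ = (LinearMap.range E.mulVecLin).map (LinearMap.funLeft R R Subtype.val) := by
          rw [Submodule.map_comap_subtype, inf_eq_right.2 (range_mulVecLin_le_ker hDE)]
      _ = _ := (LinearMap.range_comp _ _).symm
  have := hE.free_quotient_range
  exact Module.Free.of_equiv (Submodule.Quotient.equiv _ _ hD.kerEquiv hmap).symm

end IsPivotBlock

end PivotBlock

section HomogeneousMatrix

/-- `X` is a degree-preserving map between graded free modules over `MvPolynomial σ R`, where the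
variables have degrees `w`, the source has generators in degrees `gl` and the target has
generators in degrees `gm`. Degrees take values in a group, so that over `ℤ` an entry of negative
degree vanishes. -/
def IsHomogeneousMatrix {σ R M m l : Type*} [CommRing R] [AddCommGroup M] (w : σ → M)
    (X : Matrix m l (MvPolynomial σ R)) (gm : m → M) (gl : l → M) : Prop :=
  ∀ i j, IsWeightedHomogeneous w (X i j) (gl j - gm i)

theorem IsHomogeneousMatrix.isWeightedHomogeneous_det {σ R M ι : Type*} [CommRing R]
    [AddCommGroup M] [Fintype ι] [DecidableEq ι] {w : σ → M} {X : Matrix ι ι (MvPolynomial σ R)}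
    {gm gl : ι → M} (hX : IsHomogeneousMatrix w X gm gl) :
    IsWeightedHomogeneous w X.det (∑ i, gl i - ∑ i, gm i) := by
  rw [Matrix.det_apply]
  refine IsWeightedHomogeneous.sum _ _ _ fun τ _ => ?_
  have hprod : IsWeightedHomogeneous w (∏ i, X (τ i) i) (∑ i, gl i - ∑ i, gm i) := by
    rw [← Equiv.sum_comp τ gm, ← Finset.sum_sub_distrib]
    exact IsWeightedHomogeneous.prod _ _ _ fun i _ => hX (τ i) i
  rcases Int.units_eq_one_or (Equiv.Perm.sign τ) with hτ | hτ
  · rwa [hτ, one_smul]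
  · rw [hτ, Units.neg_smul, one_smul]
    exact hprod.neg

variable {σ K M m l : Type*} [Field K] [AddCommGroup M] [PartialOrder M] [IsOrderedAddMonoid M]
  {w : σ → M}

theorem isUnit_of_isWeightedHomogeneous (hw : ∀ i, 0 < w i) {q : MvPolynomial σ K} {e : M}
    (hq : IsWeightedHomogeneous w q e) (h₀ : eval 0 q ≠ 0) : IsUnit q := by
  have hc : coeff 0 q ≠ 0 := by rwa [eval_zero, constantCoeff_eq] at h₀
  have hconst : q = C (coeff 0 q) := by
    classical
    ext d
    rw [coeff_C]
    split_ifs with hd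
    · rw [hd]
    · by_contra hqd
      have hweight : Finsupp.weight w d = 0 := by
        rw [hq hqd, ← hq hc, map_zero]
      rw [Finsupp.weight_apply, Finsupp.sum,
        Finset.sum_eq_zero_iff_of_nonneg fun i _ => nsmul_nonneg (hw i).le _] at hweight
      obtain ⟨i, hi⟩ := Finsupp.support_nonempty_iff.2 (Ne.symm hd)
      exact (nsmul_pos (hw i) (Finsupp.mem_support_iff.1 hi)).ne' (hweight i hi)
  rw [hconst]
  exact (IsUnit.mk0 _ hc).map C

namespace IsHomogeneousMatrix

variable [Fintype l] {X : Matrix m l (MvPolynomial σ K)} {gm : m → M} {gl : l → M}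

theorem exists_isUnit_minor [Finite m] (hX : IsHomogeneousMatrix w X gm gl) (hw : ∀ i, 0 < w i) :
    ∃ (a : Fin (X.map (eval 0)).rank → m) (b : Fin (X.map (eval 0)).rank → l),
      IsUnit (X.submatrix a b).det := by
  obtain ⟨a, b, hab⟩ := exists_submatrix_det_ne_zero (X.map (eval 0))
  have hsub : IsHomogeneousMatrix w (X.submatrix a b) (gm ∘ a) (gl ∘ b) :=
    fun i j => hX (a i) (b j)
  refine ⟨a, b, isUnit_of_isWeightedHomogeneous hw hsub.isWeightedHomogeneous_det ?_⟩
  rwa [RingHom.map_det]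

theorem rank_eval_zero_le [Finite m] (hX : IsHomogeneousMatrix w X gm gl) (hw : ∀ i, 0 < w i)
    (ν : σ → K) : (X.map (eval 0)).rank ≤ (X.map (eval ν)).rank := by
  obtain ⟨a, b, hab⟩ := hX.exists_isUnit_minor hw
  have hν := (hab.map (eval ν)).ne_zero
  rw [RingHom.map_det] at hν
  exact (Fintype.card_fin _).symm.trans_le (card_le_rank_of_det_ne_zero (a := a) (b := b) hν)

theorem exists_isPivotBlock [Finite m] (hX : IsHomogeneousMatrix w X gm gl) (hw : ∀ i, 0 < w i)
    {s : Set (σ → K)} (hs : vanishingIdeal K s = ⊥)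
    (hrank : ∀ ν ∈ s, (X.map (eval ν)).rank ≤ (X.map (eval 0)).rank) :
    ∃ (a : Fin (X.map (eval 0)).rank → m) (b : Fin (X.map (eval 0)).rank → l),
      IsPivotBlock X a b := by
  obtain ⟨a, b, hab⟩ := hX.exists_isUnit_minor hw
  refine ⟨a, b, hab, fun i j => ?_⟩
  rw [← Ideal.mem_bot, ← hs, mem_vanishingIdeal_iff]
  intro ν hν
  by_contra hne
  rw [aeval_eq_eval, RingHom.map_det] at hne
  have hcard := (card_le_rank_of_det_ne_zero (Y := X.map (eval ν)) hne).trans (hrank ν hν)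
  rw [Fintype.card_sum, Fintype.card_fin, Fintype.card_unit] at hcard
  exact hcard.not_gt (Nat.lt_succ_self _)

end IsHomogeneousMatrix

theorem free_homology_of_rank_le {k : Type*} [Finite m] [Fintype l] [Fintype k] {s : Set (σ → K)}
    (hs : vanishingIdeal K s = ⊥) (hw : ∀ i, 0 < w i)
    {D : Matrix m l (MvPolynomial σ K)} {E : Matrix l k (MvPolynomial σ K)} (hDE : D * E = 0)
    {gm : m → M} {gl : l → M} {gk : k → M}
    (hD : IsHomogeneousMatrix w D gm gl) (hE : IsHomogeneousMatrix w E gl gk)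
    (hrankD : ∀ ν ∈ s, (D.map (eval ν)).rank ≤ (D.map (eval 0)).rank)
    (hrankE : ∀ ν ∈ s, (E.map (eval ν)).rank ≤ (E.map (eval 0)).rank) :
    Module.Free (MvPolynomial σ K) (LinearMap.ker D.mulVecLin ⧸
      (LinearMap.range E.mulVecLin).comap (LinearMap.ker D.mulVecLin).subtype) := by
  obtain ⟨a, b, hab⟩ := hD.exists_isPivotBlock hw hs hrankD
  let f : ↥(Set.range b)ᶜ → l := Subtype.val
  have hdisj : Disjoint (LinearMap.range (E.map (eval 0)).mulVecLin)
      (LinearMap.ker (LinearMap.funLeft K K f)) := by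
    refine (hab.map (eval 0)).isCompl_ker_ker_funLeft.disjoint.mono_left
      (range_mulVecLin_le_ker ?_)
    rw [← Matrix.map_mul, hDE, Matrix.map_zero _ (map_zero _)]
  have hEf : IsHomogeneousMatrix w (E.submatrix f id) (gl ∘ f) gk := fun i j => hE (f i) j
  have hrankEf : ∀ ν ∈ s,
      ((E.submatrix f id).map (eval ν)).rank ≤ ((E.submatrix f id).map (eval 0)).rank := by
    intro ν hν
    calc
      ((E.submatrix f id).map (eval ν)).rank
      _ ≤ (E.map (eval ν)).rank := (E.map (eval ν)).rank_submatrix_le f id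
      _ ≤ (E.map (eval 0)).rank := hrankE ν hν
      _ = ((E.submatrix f id).map (eval 0)).rank := (rank_submatrix_eq_of_disjoint hdisj).symm
  obtain ⟨a', b', hab'⟩ := hEf.exists_isPivotBlock hw hs hrankEf
  exact hab.free_homology hDE hab'

end HomogeneousMatrix

theorem finrank_homology_add_rank_add_rank {K m l k : Type*} [Field K] [Fintype l] [Fintype k]
    {D : Matrix m l K} {E : Matrix l k K} (hDE : D * E = 0) :
    Module.finrank K (LinearMap.ker D.mulVecLin ⧸
      (LinearMap.range E.mulVecLin).comap (LinearMap.ker D.mulVecLin).subtype) +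
        E.rank + D.rank = Fintype.card l := by
  rw [Matrix.rank, ← (Submodule.comapSubtypeEquivOfLe (range_mulVecLin_le_ker hDE)).finrank_eq,
    Submodule.finrank_quotient_add_finrank, add_comm, Matrix.rank,
    LinearMap.finrank_range_add_finrank_ker, Module.finrank_fintype_fun_eq_card]

theorem isWeightedHomogeneous_of_isHomogeneous_toNat {σ R : Type*} [CommSemiring R]
    {q : MvPolynomial σ R} {e : ℤ} (hq : q.IsHomogeneous e.toNat) (hneg : e < 0 → q = 0) :
    IsWeightedHomogeneous (1 : σ → ℤ) q e := by
  intro d hd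
  have he : 0 ≤ e := not_lt.1 fun he => hd (by rw [hneg he, coeff_zero])
  have hdegree : Finsupp.weight (1 : σ → ℤ) d = (Finsupp.weight (1 : σ → ℕ) d : ℤ) := by
    simp [Finsupp.weight_apply, Finsupp.sum]
  rw [hdegree, hq hd, Int.toNat_of_nonneg he]

theorem vanishingIdeal_pairwise_ne {σ K : Type*} [Finite σ] [Field K] [Infinite K] :
    vanishingIdeal K {ν : σ → K | ∀ i j, i ≠ j → ν i ≠ ν j} = ⊥ := by
  classical
  have := Fintype.ofFinite σ
  rw [eq_bot_iff]
  intro q hq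
  let V : MvPolynomial σ K := ∏ p ∈ Finset.univ.offDiag, (X p.1 - X p.2)
  have hV : V ≠ 0 := Finset.prod_ne_zero_iff.2 fun p hp =>
    sub_ne_zero.2 fun hX => (Finset.mem_offDiag.1 hp).2.2 (X_injective hX)
  have hqV : q * V = 0 := by
    refine MvPolynomial.funext fun ν => ?_
    rw [map_mul, map_zero]
    by_cases hν : ∀ i j, i ≠ j → ν i ≠ ν j
    · rw [← aeval_eq_eval, hq ν hν, zero_mul]
    · push Not at hν
      obtain ⟨i, j, hij, hνij⟩ := hν
      have hVν : eval ν V = 0 := by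
        rw [map_prod]
        refine Finset.prod_eq_zero (i := (i, j)) (by simpa using hij) ?_
        rw [map_sub, eval_X, eval_X, sub_eq_zero, hνij]
      rw [hVν, mul_zero]
  exact (mul_eq_zero.1 hqV).resolve_right hV

namespace GradedFreeComplex

variable {n : ℕ} (C : GradedFreeComplex n)

theorem isHomogeneousMatrix_D (k : ℤ) :
    IsHomogeneousMatrix 1 (C.D k) (C.g (k + 1)) (C.g k) := fun i j =>
  isWeightedHomogeneous_of_isHomogeneous_toNat (C.hom k i j) fun h => C.hneg k i j (sub_neg.1 h)

theorem finrank_HmlSpec_add_rank_add_rank (ν : Fin n → ℚ) (k : ℤ) :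
    Module.finrank ℚ (C.HmlSpec ν k) + (C.Dspec ν k).rank + (C.Dspec ν (k + 1)).rank =
      C.r (k + 1) := by
  have hDD : C.Dspec ν (k + 1) * C.Dspec ν k = 0 := by
    rw [Dspec, Dspec, ← Matrix.map_mul, C.dd k, Matrix.map_zero _ (map_zero _)]
  exact (finrank_homology_add_rank_add_rank hDD).trans (Fintype.card_fin _)

end GradedFreeComplex

theorem free_of_generic_specializations_general {n : ℕ} (C : GradedFreeComplex n) (k : ℤ)
    {s : Set (Fin n → ℚ)} (hs : vanishingIdeal ℚ s = ⊥)
    (hyp : ∀ ν ∈ s, Module.finrank ℚ (C.HmlSpec 0 k) ≤ Module.finrank ℚ (C.HmlSpec ν k)) :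
    Module.Free (Ay n) (C.Hml k) := by
  have hrank : ∀ ν ∈ s, (C.Dspec ν (k + 1)).rank ≤ (C.Dspec 0 (k + 1)).rank ∧
      (C.Dspec ν k).rank ≤ (C.Dspec 0 k).rank := by
    intro ν hν
    have hle := hyp ν hν
    have hdim₀ := C.finrank_HmlSpec_add_rank_add_rank 0 k
    have hdim := C.finrank_HmlSpec_add_rank_add_rank ν k
    have hsemi : (C.Dspec 0 k).rank ≤ (C.Dspec ν k).rank :=
      (C.isHomogeneousMatrix_D k).rank_eval_zero_le (fun _ => one_pos) ν
    have hsemi' : (C.Dspec 0 (k + 1)).rank ≤ (C.Dspec ν (k + 1)).rank :=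
      (C.isHomogeneousMatrix_D (k + 1)).rank_eval_zero_le (fun _ => one_pos) ν
    omega
  exact free_homology_of_rank_le hs (fun _ => one_pos) (C.dd k) (C.isHomogeneousMatrix_D (k + 1))
    (C.isHomogeneousMatrix_D k) (fun ν hν => (hrank ν hν).1) fun ν hν => (hrank ν hν).2

/-- Let `C` be a finite complex of finitely generated free graded modules over
`A = ℚ[y₁,…,y_n]`, and for `ν ∈ ℚⁿ` let `C_ν = C ⊗_A ℚ_ν` be the specialization
of `C` at `ν`.  If `H^*(C₀) ≅ H^*(C_ν)` as graded vector spaces for every generic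
`ν` (i.e. every `ν` with pairwise distinct coordinates), then `H^*(C)` is a free
`A`-module. -/
theorem free_of_generic_specializations (n : ℕ) (C : GradedFreeComplex n)
    (hyp : ∀ ν : Fin n → ℚ, (∀ i j : Fin n, i ≠ j → ν i ≠ ν j) →
      ∀ k : ℤ, Module.finrank ℚ (C.HmlSpec 0 k) = Module.finrank ℚ (C.HmlSpec ν k)) :
    ∀ k : ℤ, Module.Free (Ay n) (C.Hml k) := fun k =>
  free_of_generic_specializations_general C k vanishingIdeal_pairwise_ne fun ν hν =>
    (hyp ν hν k).le
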